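/- arXiv:1506.02791 — 7 statements merged into one kernel-verified Lean document; each statement's English description precedes it below -/
import Mathlib

section
/- If G and H are groups which both have the non-covering property, then the direct product G × H has the non-covering property. -/
/-- A group `G` has the non-covering property if for all normal subgroups `M < N` of
finite index and every `g ∈ G`, there is `h ∈ gN` such that for all `x ∈ G`,
`x⁻¹ h x ∉ gM`. -/
def NonCoveringProperty (G : Type*) [Group G] : Prop :=
  ∀ (M N : Subgroup G), M.Normal → N.Normal → M.FiniteIndex → N.FiniteIndex → M < N →
    ∀ g : G, ∃ n ∈ N, ∀ x : G, ∀ m ∈ M, x⁻¹ * (g * n) * x ≠ g * m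

/-!
The non-covering property of `G` says that, in every quotient of `G` by a normal subgroup of finite
index, no coset `g N` of a nontrivial normal subgroup `N` lies in the conjugacy class of `g`. In a
group with the latter property, a central `u` with `g` conjugate to `g u` is trivial, since then
`g` is conjugate to `g uᵏ` for every `k`.

A finite quotient `Q` of `G × H` is a quotient of `A × B`, where `A` and `B` are the images of `G`
and `H` in `Q`, and the kernel is central because it meets both factors trivially. Suppose `N` is
normal in `Q` and `g N` consists of conjugates of `g`. Lifting to `A × B`, an element of `N ∩ A`
changes the `B`-component of `g` only by a central element, which is therefore trivial; so
`N ∩ A = 1`, likewise `N ∩ B = 1`, and the preimage of `N` in `A × B` is central as well. Now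
the fact on central elements applies in both components and gives `N = 1`.
-/

open MonoidHom Function
open scoped commutatorElement

/-- The non-covering property relative to the trivial subgroup: the coset `g N` of a nontrivial
normal subgroup `N` is never contained in the conjugacy class of `g`. -/
def NoCosetInConjClass (G : Type*) [Group G] : Prop :=
  ∀ N : Subgroup G, N.Normal → ∀ g : G, (∀ n ∈ N, IsConj g (g * n)) → N = ⊥

section Quotient

variable {G Q : Type*} [Group G] [Group Q]

theorem isConj_map_iff_exists_mem_ker {φ : G →* Q} (hφ : Surjective φ) {g h : G} :
    IsConj (φ g) (φ h) ↔ ∃ k ∈ φ.ker, IsConj g (h * k) := by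
  constructor
  · intro hgh
    obtain ⟨c, hc⟩ := isConj_iff.1 hgh
    obtain ⟨x, rfl⟩ := hφ c
    refine ⟨h⁻¹ * (x * g * x⁻¹), ?_, isConj_iff.2 ⟨x, by group⟩⟩
    rw [mem_ker, map_mul, map_inv, map_mul, map_mul, map_inv, hc, inv_mul_cancel]
  · rintro ⟨k, hk, hgh⟩
    simpa only [map_mul, mem_ker.1 hk, mul_one] using φ.map_isConj hgh

theorem isConj_mk_iff_exists_conj_eq_mul {M : Subgroup G} [M.Normal] {g h : G} :
    IsConj (g : G ⧸ M) (h : G ⧸ M) ↔ ∃ x, ∃ m ∈ M, x⁻¹ * h * x = g * m := by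
  have hlift : IsConj (h : G ⧸ M) (g : G ⧸ M) ↔ ∃ m ∈ M, IsConj h (g * m) := by
    simpa only [QuotientGroup.ker_mk', QuotientGroup.mk'_apply] using
      isConj_map_iff_exists_mem_ker (QuotientGroup.mk'_surjective M) (g := h) (h := g)
  rw [isConj_comm, hlift]
  constructor
  · rintro ⟨m, hm, hconj⟩
    obtain ⟨x, hx⟩ := isConj_iff.1 hconj
    exact ⟨x⁻¹, m, hm, by rwa [inv_inv]⟩
  · rintro ⟨x, m, hm, hx⟩
    exact ⟨m, hm, isConj_iff.2 ⟨x⁻¹, by rwa [inv_inv]⟩⟩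

theorem nonCoveringProperty_iff_quotient :
    NonCoveringProperty G ↔
      ∀ (M : Subgroup G) [M.Normal] [M.FiniteIndex], NoCosetInConjClass (G ⧸ M) := by
  constructor
  · intro hG M hM hMfin N hN q hq
    obtain ⟨g, rfl⟩ := QuotientGroup.mk_surjective q
    by_contra hne
    have hlt : M < N.comap (QuotientGroup.mk' M) := by
      have hbot : (⊥ : Subgroup (G ⧸ M)).comap (QuotientGroup.mk' M) = M := by
        rw [comap_bot, QuotientGroup.ker_mk']
      exact hbot.symm.trans_lt <|
        (Subgroup.comap_lt_comap_of_surjective (QuotientGroup.mk'_surjective M)).2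
          (bot_lt_iff_ne_bot.2 hne)
    obtain ⟨n, hn, hcov⟩ := hG M (N.comap (QuotientGroup.mk' M)) hM inferInstance hMfin
      (Subgroup.finiteIndex_of_le hlt.le) hlt g
    obtain ⟨x, m, hm, hx⟩ := isConj_mk_iff_exists_conj_eq_mul.1 (hq n hn)
    exact hcov x m hm hx
  · intro hG M N hM hN hMfin _ hlt g
    by_contra! hcov
    have hbot : N.map (QuotientGroup.mk' M) = ⊥ := by
      refine hG M _ (hN.map _ (QuotientGroup.mk'_surjective M)) g ?_
      rintro _ ⟨n, hn, rfl⟩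
      exact isConj_mk_iff_exists_conj_eq_mul.2 (hcov n hn)
    rw [Subgroup.map_eq_bot_iff, QuotientGroup.ker_mk'] at hbot
    exact hlt.not_ge hbot

end Quotient

theorem conj_zpow_eq_mul_zpow {G : Type*} [Group G] {c g u : G} (huc : Commute u c)
    (h : c * g * c⁻¹ = g * u) (k : ℤ) : c ^ k * g * (c ^ k)⁻¹ = g * u ^ k := by
  have hsemiconj : SemiconjBy g (u * c) c := by
    rw [SemiconjBy, ← mul_assoc, ← h, inv_mul_cancel_right]
  have hpow : g * (u ^ k * c ^ k) = c ^ k * g := by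
    rw [← huc.mul_zpow]
    exact hsemiconj.zpow_right k
  rw [← hpow, ← mul_assoc, mul_inv_cancel_right]

theorem NoCosetInConjClass.eq_one_of_mem_center {G : Type*} [Group G] (hG : NoCosetInConjClass G)
    {g u : G} (hu : u ∈ Subgroup.center G) (h : IsConj g (g * u)) : u = 1 := by
  obtain ⟨c, hc⟩ := isConj_iff.1 h
  have hnormal : (Subgroup.zpowers u).Normal := by
    refine ⟨fun v hv x ↦ ?_⟩
    rwa [Subgroup.mem_center_iff.1 (Subgroup.zpowers_le.2 hu hv) x, mul_inv_cancel_right]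
  have hcoset : ∀ v ∈ Subgroup.zpowers u, IsConj g (g * v) :=
    Subgroup.forall_mem_zpowers.2 fun k ↦ isConj_iff.2
      ⟨c ^ k, conj_zpow_eq_mul_zpow (Subgroup.mem_center_iff.1 hu c).symm hc k⟩
  exact Subgroup.zpowers_eq_bot.1 (hG _ hnormal g hcoset)

section Prod

variable {A B Q : Type*} [Group A] [Group B] [Group Q]

theorem le_prod_center_of_comap_eq_bot {N : Subgroup (A × B)} [N.Normal]
    (hinl : N.comap (inl A B) = ⊥) (hinr : N.comap (inr A B) = ⊥) :
    N ≤ (Subgroup.center A).prod (Subgroup.center B) := by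
  intro n hn
  have hcomm (g : A × B) : ⁅g, n⁆ ∈ N :=
    N.mul_mem (Subgroup.Normal.conj_mem inferInstance n hn g) (N.inv_mem hn)
  refine ⟨Subgroup.mem_center_iff.2 fun a ↦ ?_, Subgroup.mem_center_iff.2 fun b ↦ ?_⟩
  · have ha : ⁅a, n.1⁆ ∈ N.comap (inl A B) := by
      simpa [commutatorElement_def, Prod.mul_def] using hcomm (a, 1)
    rw [hinl, Subgroup.mem_bot] at ha
    exact commutatorElement_eq_one_iff_mul_comm.1 ha
  · have hb : ⁅b, n.2⁆ ∈ N.comap (inr A B) := by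
      simpa [commutatorElement_def, Prod.mul_def] using hcomm (1, b)
    rw [hinr, Subgroup.mem_bot] at hb
    exact commutatorElement_eq_one_iff_mul_comm.1 hb

variable {φ : A × B →* Q}

theorem ker_le_prod_center_of_injective (hinl : Injective (φ.comp (inl A B)))
    (hinr : Injective (φ.comp (inr A B))) :
    φ.ker ≤ (Subgroup.center A).prod (Subgroup.center B) :=
  le_prod_center_of_comap_eq_bot (by rwa [comap_ker, ker_eq_bot_iff])
    (by rwa [comap_ker, ker_eq_bot_iff])

namespace NoCosetInConjClass

theorem comap_comp_inl_eq_bot (hA : NoCosetInConjClass A) (hB : NoCosetInConjClass B)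
    (hφ : Surjective φ) (hinl : Injective (φ.comp (inl A B)))
    (hinr : Injective (φ.comp (inr A B))) {N : Subgroup Q} [N.Normal] {q : Q}
    (hq : ∀ n ∈ N, IsConj q (q * n)) :
    N.comap (φ.comp (inl A B)) = ⊥ := by
  obtain ⟨⟨a, b⟩, rfl⟩ := hφ q
  refine hA _ inferInstance a fun n hn ↦ ?_
  have hconj_map : IsConj (φ (a, b)) (φ ((a, b) * (n, 1))) := by
    rw [map_mul]
    exact hq _ hn
  obtain ⟨⟨k₁, k₂⟩, hk, hconj⟩ := (isConj_map_iff_exists_mem_ker hφ).1 hconj_map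
  obtain rfl : k₂ = 1 := by
    refine hB.eq_one_of_mem_center (ker_le_prod_center_of_injective hinl hinr hk).2 (g := b) ?_
    simpa only [Prod.mk_mul_mk, mul_one, coe_snd] using (snd A B).map_isConj hconj
  obtain rfl : k₁ = 1 := (injective_iff_map_eq_one _).1 hinl k₁ hk
  simpa only [Prod.mk_mul_mk, mul_one, coe_fst] using (fst A B).map_isConj hconj

theorem of_prod_surjective (hA : NoCosetInConjClass A) (hB : NoCosetInConjClass B)
    (hφ : Surjective φ) (hinl : Injective (φ.comp (inl A B)))
    (hinr : Injective (φ.comp (inr A B))) : NoCosetInConjClass Q := by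
  intro N hN q hq
  have hNinl : N.comap (φ.comp (inl A B)) = ⊥ := hA.comap_comp_inl_eq_bot hB hφ hinl hinr hq
  have hNinr : N.comap (φ.comp (inr A B)) = ⊥ :=
    hB.comap_comp_inl_eq_bot (φ := φ.comp (MulEquiv.prodComm (M := B) (N := A)).toMonoidHom) hA
      (hφ.comp MulEquiv.prodComm.surjective) hinr hinl hq
  obtain ⟨g, rfl⟩ := hφ q
  rw [← Subgroup.map_comap_eq_self_of_surjective hφ N, Subgroup.map_eq_bot_iff]
  intro n hn
  have hconj_map : IsConj (φ g) (φ (g * n)) := by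
    rw [map_mul]
    exact hq _ hn
  obtain ⟨k, hk, hconj⟩ := (isConj_map_iff_exists_mem_ker hφ).1 hconj_map
  rw [mul_assoc] at hconj
  have hcenter : n * k ∈ (Subgroup.center A).prod (Subgroup.center B) :=
    mul_mem (le_prod_center_of_comap_eq_bot hNinl hNinr hn)
      (ker_le_prod_center_of_injective hinl hinr hk)
  have hnk : n * k = 1 := Prod.ext
    (hA.eq_one_of_mem_center hcenter.1 ((fst A B).map_isConj hconj))
    (hB.eq_one_of_mem_center hcenter.2 ((snd A B).map_isConj hconj))
  rw [eq_inv_of_mul_eq_one_left hnk]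
  exact inv_mem hk

end NoCosetInConjClass

end Prod

theorem NoCosetInConjClass.of_ker_comp {G H Q : Type*} [Group G] [Group H] [Group Q]
    {φ : G × H →* Q} (hφ : Surjective φ)
    (hG : NoCosetInConjClass (G ⧸ (φ.comp (inl G H)).ker))
    (hH : NoCosetInConjClass (H ⧸ (φ.comp (inr G H)).ker)) : NoCosetInConjClass Q := by
  let f := QuotientGroup.kerLift (φ.comp (inl G H))
  let k := QuotientGroup.kerLift (φ.comp (inr G H))
  have hcomm : ∀ a b, Commute (f a) (k b) := by
    rintro ⟨a⟩ ⟨b⟩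
    exact (commute_inl_inr a b).map φ
  refine hG.of_prod_surjective hH (φ := f.noncommCoprod k hcomm) ?_ ?_ ?_
  · intro q
    obtain ⟨⟨a, b⟩, rfl⟩ := hφ q
    refine ⟨(a, b), ?_⟩
    simp [f, k, ← map_mul]
  · rw [noncommCoprod_comp_inl]
    exact QuotientGroup.kerLift_injective _
  · rw [noncommCoprod_comp_inr]
    exact QuotientGroup.kerLift_injective _

/-- If `G` and `H` both have the non-covering property, then so does `G × H`. -/
theorem prod_nonCoveringProperty (G H : Type*) [Group G] [Group H]
    (hG : NonCoveringProperty G) (hH : NonCoveringProperty H) :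
    NonCoveringProperty (G × H) := by
  rw [nonCoveringProperty_iff_quotient] at hG hH ⊢
  intro M _ _
  exact .of_ker_comp (QuotientGroup.mk'_surjective M) (hG _) (hH _)
end

section
/- Let G be a group with the non-covering property. Let M and N be normal subgroups of G of finite index such that N is not contained in M, and let g₁, g₂ ∈ G. Then there exists h ∈ g₁N such that for all x ∈ G, x⁻¹hx ∉ g₂M. -/
/-!
Membership of a conjugate of `h` in `gM` means that `h` and `g` have conjugate images in `G ⧸ M`.
If the image of every element of `g₁N` were conjugate to that of `g₂`, then all these images would
be conjugate to that of `g₁`, since `g₁ ∈ g₁N`. As `g₁N` and `g₁(N ⊔ M)` have the same image in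
`G ⧸ M`, this contradicts the non-covering property for `M < N ⊔ M` and the single element `g₁`.
-/

section

variable {G : Type*} [Group G] {M N : Subgroup G} [M.Normal]

theorem isConj_quotientMk_iff {g h : G} :
    IsConj (h : G ⧸ M) (g : G ⧸ M) ↔ ∃ x : G, ∃ m ∈ M, x⁻¹ * h * x = g * m := by
  constructor
  · intro hconj
    obtain ⟨c, hc⟩ := isConj_iff.mp hconj.symm
    obtain ⟨x, rfl⟩ := QuotientGroup.mk_surjective c
    have hmk : (g : G ⧸ M) = ((x⁻¹ * h * x : G) : G ⧸ M) := by
      simp only [QuotientGroup.mk_mul, QuotientGroup.mk_inv, ← hc]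
      group
    exact ⟨x, g⁻¹ * (x⁻¹ * h * x), QuotientGroup.eq.mp hmk, (mul_inv_cancel_left g _).symm⟩
  · rintro ⟨x, m, hm, hx⟩
    refine isConj_iff.mpr ⟨((x⁻¹ : G) : G ⧸ M), ?_⟩
    rw [← QuotientGroup.mk_mul, ← QuotientGroup.mk_inv, ← QuotientGroup.mk_mul, inv_inv, hx,
      QuotientGroup.mk_mul_of_mem g hm]

theorem exists_mem_quotientMk_eq_of_mem_sup {k : G} (hk : k ∈ N ⊔ M) :
    ∃ n ∈ N, (n : G ⧸ M) = k := by
  obtain ⟨n, hn, m, hm, rfl⟩ := Subgroup.mem_sup_of_normal_right.mp hk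
  exact ⟨n, hn, (QuotientGroup.mk_mul_of_mem n hm).symm⟩

theorem NonCoveringProperty.exists_not_isConj_quotientMk (hG : NonCoveringProperty G)
    [N.Normal] [M.FiniteIndex] (hMN : M < N) (g : G) :
    ∃ n ∈ N, ¬ IsConj ((g * n : G) : G ⧸ M) (g : G ⧸ M) := by
  obtain ⟨n, hn, hne⟩ := hG M N inferInstance inferInstance inferInstance
    (Subgroup.finiteIndex_of_le hMN.le) hMN g
  refine ⟨n, hn, fun hconj => ?_⟩
  obtain ⟨x, m, hm, hx⟩ := isConj_quotientMk_iff.mp hconj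
  exact hne x m hm hx

theorem NonCoveringProperty.exists_not_isConj_quotientMk_of_not_le (hG : NonCoveringProperty G)
    [N.Normal] [M.FiniteIndex] (hNM : ¬ N ≤ M) (g₁ g₂ : G) :
    ∃ n ∈ N, ¬ IsConj ((g₁ * n : G) : G ⧸ M) (g₂ : G ⧸ M) := by
  by_contra! hconj
  obtain ⟨k, hk, hk_not_conj⟩ :=
    hG.exists_not_isConj_quotientMk (right_lt_sup.mpr hNM) g₁
  obtain ⟨n, hn, hnk⟩ := exists_mem_quotientMk_eq_of_mem_sup hk
  have hg₁ : IsConj (g₁ : G ⧸ M) (g₂ : G ⧸ M) := by simpa using hconj 1 N.one_mem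
  have hg₁k : IsConj ((g₁ * k : G) : G ⧸ M) (g₂ : G ⧸ M) := by
    simpa only [QuotientGroup.mk_mul, hnk] using hconj n hn
  exact hk_not_conj (hg₁k.trans hg₁.symm)

end

theorem nonCoveringProperty_two_cosets_general (G : Type*) [Group G]
    (hG : NonCoveringProperty G) (M N : Subgroup G)
    (hMnormal : M.Normal) (hNnormal : N.Normal) (hMfi : M.FiniteIndex)
    (hNM : ¬ N ≤ M) (g₁ g₂ : G) :
    ∃ n ∈ N, ∀ x : G, ∀ m ∈ M, x⁻¹ * (g₁ * n) * x ≠ g₂ * m := by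
  obtain ⟨n, hn, hconj⟩ := hG.exists_not_isConj_quotientMk_of_not_le hNM g₁ g₂
  exact ⟨n, hn, fun x m hm hx => hconj (isConj_quotientMk_iff.mpr ⟨x, m, hm, hx⟩)⟩

/-- If `G` has the non-covering property, `M, N` are finite-index normal subgroups with
`N ⊄ M`, and `g₁, g₂ ∈ G`, then there is `h ∈ g₁N` such that for all `x ∈ G`,
`x⁻¹ h x ∉ g₂M`. -/
theorem nonCoveringProperty_two_cosets (G : Type*) [Group G]
    (hG : NonCoveringProperty G) (M N : Subgroup G)
    (hMnormal : M.Normal) (hNnormal : N.Normal)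
    (hMfi : M.FiniteIndex) (hNfi : N.FiniteIndex)
    (hNM : ¬ N ≤ M) (g₁ g₂ : G) :
    ∃ n ∈ N, ∀ x : G, ∀ m ∈ M, x⁻¹ * (g₁ * n) * x ≠ g₂ * m :=
  nonCoveringProperty_two_cosets_general G hG M N hMnormal hNnormal hMfi hNM g₁ g₂
end

section
/- The symmetric group S₃ on three elements does not have the non-covering property. -/
/-! If `g` commutes with no nontrivial element of a finite normal subgroup `N`, then `x ↦ [x, g]` is
injective on `N`, hence surjective onto `N`, so the conjugates `x g x⁻¹ = [x, g] g` fill the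
whole coset `gN`. A group with such a `g` and `N ≠ 1` violates the non-covering property at `M = 1`;
in `S₃`, take `N = A₃` and `g` a transposition. -/

section Group

variable {G : Type*} [Group G]

theorem not_nonCoveringProperty_of_forall_isConj {M N : Subgroup G} [hM : M.Normal] [hN : N.Normal]
    [hMi : M.FiniteIndex] (hMN : M < N) {g : G}
    (hg : ∀ n ∈ N, ∃ m ∈ M, IsConj (g * m) (g * n)) : ¬ NonCoveringProperty G := by
  intro hG
  obtain ⟨n, hn, hne⟩ := hG M N hM hN hMi (Subgroup.finiteIndex_of_le hMN.le) hMN g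
  obtain ⟨m, hm, hconj⟩ := hg n hn
  obtain ⟨x, hx⟩ := isConj_iff.mp hconj
  exact hne x m hm (by rw [← hx]; group)

theorem isConj_mul_of_disjoint_centralizer {N : Subgroup G} [hN : N.Normal] [Finite N] {g : G}
    (hg : Disjoint N (Subgroup.centralizer {g})) {n : G} (hn : n ∈ N) : IsConj g (g * n) := by
  have hfree : MonoidHom.FixedPointFree (MulAut.conjNormal (H := N) g) := by
    intro x hx
    have hfix : g * x * g⁻¹ = x := congrArg Subtype.val hx
    have hcomm : (x : G) ∈ Subgroup.centralizer {g} :=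
      Subgroup.mem_centralizer_singleton_iff.mpr (mul_inv_eq_iff_eq_mul.mp hfix).symm
    exact Subtype.ext (Subgroup.disjoint_def.mp hg x.2 hcomm)
  obtain ⟨x, hx⟩ := hfree.commutatorMap_surjective ⟨g * n * g⁻¹, hN.conj_mem n hn g⟩
  have hcommutator : (x : G) / (g * x * g⁻¹) = g * n * g⁻¹ := congrArg Subtype.val hx
  refine isConj_iff.mpr ⟨x, ?_⟩
  calc x * g * (x : G)⁻¹ = x / (g * x * g⁻¹) * g := by rw [div_eq_mul_inv]; group
    _ = g * n := by rw [hcommutator, inv_mul_cancel_right]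

theorem not_nonCoveringProperty_of_disjoint_centralizer [Finite G] {N : Subgroup G} [N.Normal]
    (hN : N ≠ ⊥) {g : G} (hg : Disjoint N (Subgroup.centralizer {g})) :
    ¬ NonCoveringProperty G :=
  not_nonCoveringProperty_of_forall_isConj hN.bot_lt fun n hn =>
    ⟨1, one_mem _, by simpa only [mul_one] using isConj_mul_of_disjoint_centralizer hg hn⟩

end Group

theorem disjoint_alternatingGroup_centralizer_swap {i j : Fin 3} (hij : i ≠ j) :
    Disjoint (alternatingGroup (Fin 3)) (Subgroup.centralizer {Equiv.swap i j}) := by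
  simp only [Subgroup.disjoint_def, Equiv.Perm.mem_alternatingGroup,
    Subgroup.mem_centralizer_singleton_iff]
  decide +revert

/-- The symmetric group `S₃` does not have the non-covering property. -/
theorem symmGroup3_not_nonCoveringProperty :
    ¬ NonCoveringProperty (Equiv.Perm (Fin 3)) := by
  have hA₃ : alternatingGroup (Fin 3) ≠ ⊥ :=
    (Subgroup.nontrivial_iff_ne_bot _).mp inferInstance
  exact not_nonCoveringProperty_of_disjoint_centralizer hA₃
    (disjoint_alternatingGroup_centralizer_swap zero_ne_one)
end

section
/- The dihedral group of order 8 does not have the non-covering property. -/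
/-!
If `g` lies in the second centre `Z₂(G)`, then `x ↦ ⁅g, x⁆` is a homomorphism with central image
`N`, and `x * g⁻¹ * x⁻¹ = g⁻¹ * ⁅g, x⁆`, so the coset `g⁻¹N` is the conjugacy class of `g⁻¹`.
When `g` is not central, `N` is nontrivial, and in a finite group the pair `⊥ < N` together with
`g⁻¹` violates the non-covering property. Since the upper central series of a nonabelian nilpotent
group cannot stabilise at the centre, such a `g` exists in every finite nonabelian nilpotent group.
-/

section

open Subgroup
open scoped commutatorElement

variable {G : Type*} [Group G] {g : G}

theorem normal_of_le_center {N : Subgroup G} (hN : N ≤ center G) : N.Normal where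
  conj_mem n hn x := by
    rwa [mem_center_iff.mp (hN hn) x, mul_inv_cancel_right]

theorem inv_mul_inv_mul_commutatorElement_mul (g x : G) :
    x⁻¹ * (g⁻¹ * ⁅g, x⁆) * x = g⁻¹ := by
  simp [commutatorElement_def, mul_assoc]

theorem commutatorElement_mem_center_of_mem_upperCentralSeries_two
    (hg : g ∈ Subgroup.upperCentralSeries G 2) (x : G) : ⁅g, x⁆ ∈ center G :=
  Subgroup.upperCentralSeries_one G ▸ Subgroup.mem_upperCentralSeries_succ_iff.mp hg x

/-- The homomorphism `x ↦ ⁅g, x⁆` attached to an element `g` of the second centre, used for its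
range, the central subgroup of all commutators `⁅g, x⁆`. It is encoded as a map into `G`, rather
than into the centre, so that its range is a subgroup of `G`. -/
def commutatorHom (hg : g ∈ Subgroup.upperCentralSeries G 2) : G →* G where
  toFun x := ⁅g, x⁆
  map_one' := commutatorElement_one_right g
  map_mul' x y := by
    have hxy : x * ⁅g, y⁆ = ⁅g, y⁆ * x :=
      mem_center_iff.mp (commutatorElement_mem_center_of_mem_upperCentralSeries_two hg y) x
    rw [commutatorElement_mul_right_eq_mul_conj, mul_assoc ⁅g, x⁆, hxy, ← mul_assoc,
      mul_inv_cancel_right]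

theorem range_commutatorHom_le_center (hg : g ∈ Subgroup.upperCentralSeries G 2) :
    (commutatorHom hg).range ≤ center G := by
  rintro _ ⟨x, rfl⟩
  exact commutatorElement_mem_center_of_mem_upperCentralSeries_two hg x

theorem range_commutatorHom_eq_bot_iff (hg : g ∈ Subgroup.upperCentralSeries G 2) :
    (commutatorHom hg).range = ⊥ ↔ g ∈ center G := by
  rw [MonoidHom.range_eq_bot_iff, MonoidHom.ext_iff, mem_center_iff]
  exact forall_congr' fun _ ↦ commutatorElement_eq_one_iff_mul_comm.trans eq_comm

theorem not_nonCoveringProperty_of_mem_upperCentralSeries_two [Finite G]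
    (hg : g ∈ Subgroup.upperCentralSeries G 2) (hgc : g ∉ center G) :
    ¬ NonCoveringProperty G := by
  intro h
  have hnormal : (commutatorHom hg).range.Normal :=
    normal_of_le_center (range_commutatorHom_le_center hg)
  have hbot : ⊥ < (commutatorHom hg).range :=
    bot_lt_iff_ne_bot.mpr (mt (range_commutatorHom_eq_bot_iff hg).mp hgc)
  obtain ⟨_, ⟨x, rfl⟩, hx⟩ :=
    h ⊥ _ inferInstance hnormal inferInstance inferInstance hbot g⁻¹
  have hconj : x⁻¹ * (g⁻¹ * commutatorHom hg x) * x = g⁻¹ * 1 :=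
    (inv_mul_inv_mul_commutatorElement_mul g x).trans (mul_one g⁻¹).symm
  exact hx x 1 (one_mem ⊥) hconj

theorem center_lt_upperCentralSeries_two [Group.IsNilpotent G] (hG : ¬ IsMulCommutative G) :
    center G < Subgroup.upperCentralSeries G 2 := by
  rw [← Subgroup.upperCentralSeries_one G]
  refine (Subgroup.upperCentralSeries_mono G one_le_two).lt_of_ne fun hstable ↦ hG ?_
  rw [← Subgroup.upperCentralSeries_one_eq_top_iff]
  exact Subgroup.upperCentralSeries.eq_top (by decide) hstable

theorem dihedral8_not_nonCoveringProperty_general [Finite G] [Group.IsNilpotent G]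
    (hG : ¬ IsMulCommutative G) : ¬ NonCoveringProperty G := by
  obtain ⟨g, hg, hgc⟩ := SetLike.exists_of_lt (center_lt_upperCentralSeries_two hG)
  exact not_nonCoveringProperty_of_mem_upperCentralSeries_two hg hgc

end

theorem isNilpotent_dihedralGroup_two_pow (k : ℕ) :
    Group.IsNilpotent (DihedralGroup (2 ^ k)) := by
  have hcard : Nat.card (DihedralGroup (2 ^ k)) = 2 ^ (k + 1) := by
    rw [DihedralGroup.nat_card, pow_succ']
  exact (IsPGroup.of_card hcard).isNilpotent

/-- The dihedral group of order 8 does not have the non-covering property. -/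
theorem dihedral8_not_nonCoveringProperty :
    ¬ NonCoveringProperty (DihedralGroup 4) :=
  have := isNilpotent_dihedralGroup_two_pow 2
  dihedral8_not_nonCoveringProperty_general (DihedralGroup.not_commutative (by decide) (by decide))
end

section
/- Let G and H be groups, and let M and N be normal subgroups of G × H with M ⊆ N and M ≠ N. Suppose the projections agree: π₁(M) = π₁(N) as subgroups of G and π₂(M) = π₂(N) as subgroups of H. Define M₁ = {x ∈ G : (x,e) ∈ M}, N₁ = {x ∈ G : (x,e) ∈ N}, M₂ = {y ∈ H : (e,y) ∈ M}, and N₂ = {y ∈ H : (e,y) ∈ N}. Then M₁ is strictly contained in N₁ and M₂ is strictly contained in N₂. -/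
/-!
By Dedekind's modular law, subgroups `M ≤ N` with the same image under `f` and the same
intersection with `ker f` are equal. So if `M < N` have the same image, they are already
distinguished inside `ker f`. Taking for `f` a projection of `G × H` onto one factor, `ker f` is the
copy of the other factor.
-/

section

variable {K P Q : Type*} [Group K] [Group P] [Group Q] {f : P →* Q} {M N : Subgroup P}

theorem eq_of_le_of_map_le_map_of_inf_ker_le (hMN : M ≤ N) (hmap : N.map f ≤ M.map f)
    (hker : N ⊓ f.ker ≤ M) : M = N := by
  refine le_antisymm hMN fun n hn ↦ ?_
  obtain ⟨m, hm, hfm⟩ := hmap (Subgroup.mem_map_of_mem f hn)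
  have hdiv : n / m ∈ N ⊓ f.ker := ⟨N.div_mem hn (hMN hm), f.div_mem_ker_iff.mpr hfm.symm⟩
  simpa only [div_mul_cancel] using M.mul_mem (hker hdiv) hm

theorem kernels_strictly_contained_general {i : K →* P} (hker : f.ker ≤ i.range)
    (hMN : M < N) (hmap : N.map f ≤ M.map f) : M.comap i < N.comap i := by
  refine lt_of_le_not_ge (Subgroup.comap_mono hMN.le) fun hcomap ↦ hMN.ne ?_
  refine eq_of_le_of_map_le_map_of_inf_ker_le hMN.le hmap ?_
  calc
    N ⊓ f.ker ≤ i.range ⊓ N := le_inf (inf_le_right.trans hker) inf_le_left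
    _ = (N.comap i).map i := (Subgroup.map_comap_eq i N).symm
    _ ≤ M := Subgroup.map_le_iff_le_comap.mpr hcomap

end

theorem range_inl_eq_ker_snd (G H : Type*) [Group G] [Group H] :
    (MonoidHom.inl G H).range = (MonoidHom.snd G H).ker := by
  ext ⟨x, y⟩
  simp [MonoidHom.mem_range, Subgroup.mem_prod, eq_comm]

theorem range_inr_eq_ker_fst (G H : Type*) [Group G] [Group H] :
    (MonoidHom.inr G H).range = (MonoidHom.fst G H).ker := by
  ext ⟨x, y⟩
  simp [MonoidHom.mem_range, Subgroup.mem_prod, eq_comm]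

/-- Let `M ⊆ N` be distinct normal subgroups of `G × H` whose projections to `G` agree
and whose projections to `H` agree. Then `M₁ = {x : (x,e) ∈ M}` is strictly contained
in `N₁` and `M₂ = {y : (e,y) ∈ M}` is strictly contained in `N₂`. -/
theorem kernels_strictly_contained (G H : Type*) [Group G] [Group H]
    (M N : Subgroup (G × H)) (hM : M.Normal) (hN : N.Normal)
    (hMN : M ≤ N) (hne : M ≠ N)
    (hfst : M.map (MonoidHom.fst G H) = N.map (MonoidHom.fst G H))
    (hsnd : M.map (MonoidHom.snd G H) = N.map (MonoidHom.snd G H)) :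
    M.comap (MonoidHom.inl G H) < N.comap (MonoidHom.inl G H) ∧
    M.comap (MonoidHom.inr G H) < N.comap (MonoidHom.inr G H) :=
  ⟨kernels_strictly_contained_general (range_inl_eq_ker_snd G H).ge (hMN.lt_of_ne hne) hsnd.ge,
    kernels_strictly_contained_general (range_inr_eq_ker_fst G H).ge (hMN.lt_of_ne hne) hfst.ge⟩
end

section
/- Let p, q₁, …, qₖ be pairwise distinct prime numbers, and for a prime r let 2^{1/r} denote the positive real r-th root of 2. Then 2^{1/p} does not belong to the subfield of ℝ generated over ℚ by 2^{1/q₁}, …, 2^{1/qₖ}. -/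
/-!
If `x ≥ 0` has a power `x ^ m` in a field `K` of degree `d` under `K(x)`, then the norm `N` of `x`
satisfies `N ^ m = (x ^ d) ^ m`, so `x ^ d = |N|` lies in `K`. As `d` is also the least positive
exponent with this property, it divides `m`. By the tower law, adjoining nonnegative radicals with
exponents coprime to `n` therefore gives degrees coprime to `n`. In an extension of degree `d`
coprime to `n`, an `n`-th root of `a : K` has a norm whose `n`-th power is `a ^ d`, which makes `a`
an `n`-th power already in `K`.
-/

open IntermediateField Module

section FieldExtension

variable {K L : Type*} [Field K] [Field L] [Algebra K L]

theorem exists_pow_eq_of_coprime_finrank {n : ℕ} (hn : (finrank K L).Coprime n) {a : K} {y : L}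
    (hy : y ^ n = algebraMap K L a) : ∃ b : K, b ^ n = a := by
  have norm_pow : a ^ finrank K L = Algebra.norm K y ^ n := by
    rw [← map_pow, hy, Algebra.norm_algebraMap]
  obtain ⟨b, hb, -⟩ := ((Commute.all _ _).pow_eq_pow_iff_of_coprime hn).1 norm_pow
  exact ⟨b, hb.symm⟩

theorem finrank_adjoin_simple_le_of_pow_mem {x : L} {m : ℕ} (hm : m ≠ 0)
    (hxm : x ^ m ∈ (⊥ : IntermediateField K L)) : finrank K K⟮x⟯ ≤ m := by
  obtain ⟨c, hc⟩ := mem_bot.1 hxm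
  have monic : (.X ^ m - .C c : Polynomial K).Monic := Polynomial.monic_X_pow_sub_C c hm
  have root : Polynomial.aeval x (.X ^ m - .C c : Polynomial K) = 0 := by simp [hc]
  rw [adjoin.finrank ⟨_, monic, root⟩, ← Polynomial.natDegree_X_pow_sub_C (n := m) (r := c)]
  exact Polynomial.natDegree_le_natDegree (minpoly.min K x monic root)

end FieldExtension

section NonnegRadical

variable {F E : Type*} [Field F] [Field E] [LinearOrder E] [IsStrictOrderedRing E] [Algebra F E]

theorem pow_finrank_adjoin_simple_mem {x : E} (hx : 0 ≤ x) {m : ℕ} (hm : m ≠ 0)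
    (hxm : x ^ m ∈ (⊥ : IntermediateField F E)) :
    x ^ finrank F F⟮x⟯ ∈ (⊥ : IntermediateField F E) := by
  obtain ⟨c, hc⟩ := mem_bot.1 hxm
  set N : F := Algebra.norm F (AdjoinSimple.gen F x)
  have gen_pow : AdjoinSimple.gen F x ^ m = algebraMap F F⟮x⟯ c := Subtype.ext hc.symm
  have norm_pow : N ^ m = c ^ finrank F F⟮x⟯ := by
    rw [← map_pow, gen_pow, Algebra.norm_algebraMap]
  have abs_norm : |algebraMap F E N| = x ^ finrank F F⟮x⟯ := by
    refine (pow_left_inj₀ (abs_nonneg _) (by positivity) hm).1 ?_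
    rw [← abs_pow, ← map_pow, norm_pow, map_pow, hc, pow_right_comm, abs_of_nonneg (by positivity)]
  rw [← abs_norm]
  rcases abs_choice (algebraMap F E N) with h | h <;> rw [h]
  · exact mem_bot.2 ⟨N, rfl⟩
  · exact neg_mem (mem_bot.2 ⟨N, rfl⟩)

theorem finrank_adjoin_simple_dvd_of_pow_mem {x : E} (hx : 0 ≤ x) {m : ℕ}
    (hxm : x ^ m ∈ (⊥ : IntermediateField F E)) : finrank F F⟮x⟯ ∣ m := by
  rcases eq_or_ne m 0 with rfl | hm
  · exact dvd_zero _
  rcases hx.eq_or_lt with rfl | hx_pos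
  · simp
  have hxd := pow_finrank_adjoin_simple_mem hx hm hxm
  set d := finrank F F⟮x⟯
  have d_pos : 0 < d := by
    obtain ⟨c, hc⟩ := mem_bot.1 hxm
    have integral : IsIntegral F x :=
      .of_pow (Nat.pos_of_ne_zero hm) (hc ▸ isIntegral_algebraMap)
    have := adjoin.finiteDimensional integral
    exact finrank_pos
  have hxr : x ^ (m % d) ∈ (⊥ : IntermediateField F E) := by
    have : x ^ (m % d) = x ^ m / (x ^ d) ^ (m / d) := by
      rw [eq_div_iff (by positivity), ← pow_mul, ← pow_add, Nat.mod_add_div]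
    rw [this]
    exact div_mem hxm (pow_mem hxd _)
  by_contra hdvd
  have hr : m % d ≠ 0 := mt Nat.dvd_of_mod_eq_zero hdvd
  exact (finrank_adjoin_simple_le_of_pow_mem hr hxr).not_gt (Nat.mod_lt m d_pos)

theorem coprime_finrank_adjoin_finset {n : ℕ} {S : Finset E}
    (hS : ∀ x ∈ S, 0 ≤ x ∧ ∃ m : ℕ, m.Coprime n ∧ x ^ m ∈ (⊥ : IntermediateField F E)) :
    (finrank F (adjoin F (S : Set E))).Coprime n := by
  refine induction_on_adjoin_finset S (fun K ↦ (finrank F K).Coprime n) (by simp) ?_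
  intro K x hxS hK
  obtain ⟨hx, m, hmn, hxm⟩ := hS x hxS
  have hxmK : x ^ m ∈ (⊥ : IntermediateField K E) := by
    obtain ⟨c, hc⟩ := mem_bot.1 hxm
    exact mem_bot.2 ⟨algebraMap F K c, hc⟩
  have hKx : (finrank K K⟮x⟯).Coprime n :=
    hmn.coprime_dvd_left (finrank_adjoin_simple_dvd_of_pow_mem hx hxmK)
  have tower : finrank F K * finrank K K⟮x⟯ = finrank F (K⟮x⟯.restrictScalars F) :=
    finrank_mul_finrank F K K⟮x⟯
  exact tower ▸ hK.mul_left hKx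

theorem exists_pow_eq_of_mem_adjoin {n : ℕ} {S : Set E}
    (hS : ∀ x ∈ S, 0 ≤ x ∧ ∃ m : ℕ, m.Coprime n ∧ x ^ m ∈ (⊥ : IntermediateField F E))
    {a : F} {y : E} (hy : y ^ n = algebraMap F E a) (hyS : y ∈ adjoin F S) :
    ∃ b : F, b ^ n = a := by
  obtain ⟨T, hTS, hyT⟩ := exists_finset_of_mem_adjoin hyS
  have hT : (finrank F (adjoin F (T : Set E))).Coprime n :=
    coprime_finrank_adjoin_finset fun x hx ↦ hS x (hTS hx)
  exact exists_pow_eq_of_coprime_finrank hT (y := ⟨y, hyT⟩) (Subtype.ext hy)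

end NonnegRadical

theorem rat_pow_ne_prime {ℓ n : ℕ} (hℓ : ℓ.Prime) (hn : n ≠ 1) (b : ℚ) : b ^ n ≠ ℓ := by
  intro hb
  have : Fact ℓ.Prime := ⟨hℓ⟩
  have valuation : (n : ℤ) * padicValRat ℓ b = 1 := by
    rw [← padicValRat.pow, hb, padicValRat.self hℓ.one_lt]
  exact hn (by exact_mod_cast Int.eq_one_of_mul_eq_one_right n.cast_nonneg valuation)

theorem prime_root_not_in_subfield_general {ι : Type*} {n : ℕ} (hn : n ≠ 0) {a : ℚ} (ha : 0 ≤ a)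
    (ha_pow : ∀ b : ℚ, b ^ n ≠ a) {m : ι → ℕ} (hm : ∀ i, (m i).Coprime n)
    {c : ι → ℚ} (hc : ∀ i, 0 ≤ c i) :
    (a : ℝ) ^ (n : ℝ)⁻¹ ∉ Subfield.closure
      (Set.range ((↑) : ℚ → ℝ) ∪ Set.range fun i ↦ (c i : ℝ) ^ (m i : ℝ)⁻¹) := by
  have hn_one : n ≠ 1 := fun h ↦ ha_pow a (by rw [h, pow_one])
  have hm_zero (i : ι) : m i ≠ 0 := fun h ↦ hn_one (by simpa [h] using hm i)
  have hc_real (i : ι) : (0 : ℝ) ≤ c i := by exact_mod_cast hc i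
  have radicals : ∀ x ∈ Set.range fun i ↦ (c i : ℝ) ^ (m i : ℝ)⁻¹,
      0 ≤ x ∧ ∃ k : ℕ, k.Coprime n ∧ x ^ k ∈ (⊥ : IntermediateField ℚ ℝ) := by
    rintro _ ⟨i, rfl⟩
    refine ⟨Real.rpow_nonneg (hc_real i) _, m i, hm i, ?_⟩
    rw [Real.rpow_inv_natCast_pow (hc_real i) (hm_zero i)]
    exact mem_bot.2 ⟨c i, rfl⟩
  have root : ((a : ℝ) ^ (n : ℝ)⁻¹) ^ n = a :=
    Real.rpow_inv_natCast_pow (by exact_mod_cast ha) hn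
  intro hmem
  obtain ⟨b, hb⟩ := exists_pow_eq_of_mem_adjoin radicals root hmem
  exact ha_pow b hb

/-- Let `p, q₁, …, qₖ` be pairwise distinct primes. Then `2^(1/p)` does not belong to
the subfield of `ℝ` generated over `ℚ` by `2^(1/q₁), …, 2^(1/qₖ)`. -/
theorem prime_root_not_in_subfield (k : ℕ) (p : ℕ) (q : Fin k → ℕ)
    (hp : Nat.Prime p) (hq : ∀ i, Nat.Prime (q i))
    (hqinj : Function.Injective q) (hpq : ∀ i, q i ≠ p) :
    (2 : ℝ) ^ ((p : ℝ)⁻¹) ∉ Subfield.closure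
      (Set.range ((↑) : ℚ → ℝ) ∪ Set.range fun i => (2 : ℝ) ^ (((q i : ℕ) : ℝ)⁻¹)) := by
  simpa using prime_root_not_in_subfield_general hp.ne_zero zero_le_two
    (rat_pow_ne_prime Nat.prime_two hp.ne_one)
    (fun i ↦ (Nat.coprime_primes (hq i) hp).2 (hpq i)) (c := fun _ ↦ 2) (fun _ ↦ zero_le_two)
end

section
/- Let S be a set of prime numbers and let K be the subfield of ℝ generated over ℚ by {√p : p ∈ S}, where √p denotes the positive real square root of p. Then for every function ε : S → {1, −1} there exists a ring automorphism σ of K such that σ(√p) = ε(p)·√p for every p ∈ S. -/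
/-!
Adjoin square roots to a field `F` of characteristic not two. If `t² ∈ F` and `t` lies in the field
generated over `F` by a multiplicative monoid `A` of nonzero square roots, then `t` is, up to a
factor in `F`, already an element of `A`. Let `χ` be a sign character on a monoid of square roots,
trivial on those that lie in `F`, and let `χ q = -1`. Then `q` does not lie in the field generated
by the kernel of `χ`, so some Galois automorphism fixes that field and sends `q` to `-q`. Every `m`
with `χ m = -1` satisfies `χ (m q) = 1`, hence is negated as well: a single automorphism realises
all of `χ`, even when infinitely many signs are `-1`.

For primes, a product of distinct `√p` is rational only when it is empty, so `√p ↦ ε p` extends to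
such a character.
-/

open IntermediateField Polynomial

section SquareRoots

variable {F E : Type*} [Field F] [Field E] [Algebra F E]

theorem exists_eq_add_mul_of_mem_adjoin_simple {K : IntermediateField F E} {s t : E}
    (hs : s ^ 2 ∈ K) (ht : t ∈ K⟮s⟯) : ∃ a ∈ K, ∃ b ∈ K, t = a + b * s := by
  let P : K[X] := X ^ 2 - C ⟨s ^ 2, hs⟩
  have hP : P.Monic := monic_X_pow_sub_C _ two_ne_zero
  have hPs : aeval s P = 0 := by simp [P]
  have hs_alg : IsAlgebraic K s := IsIntegral.isAlgebraic ⟨P, hP, hPs⟩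
  rw [← mem_toSubalgebra, adjoin_simple_toSubalgebra_of_isAlgebraic hs_alg,
    Algebra.adjoin_singleton_eq_range_aeval] at ht
  obtain ⟨f, rfl⟩ := ht
  have hdeg : (f %ₘ P).natDegree ≤ 1 := by
    have := natDegree_modByMonic_lt f hP fun h ↦ by simpa [P] using congrArg natDegree h
    rw [natDegree_X_pow_sub_C] at this
    omega
  obtain ⟨b, a, hba⟩ := exists_eq_X_add_C_of_natDegree_le_one hdeg
  refine ⟨a, a.2, b, b.2, ?_⟩
  change aeval s f = _
  rw [← aeval_modByMonic_eq_self_of_root hPs, hba]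
  simp [add_comm]

theorem mem_or_mul_mem_of_mem_adjoin_simple [NeZero (2 : E)] {K : IntermediateField F E} {s t : E}
    (hs : s ^ 2 ∈ K) (ht : t ^ 2 ∈ K) (hts : t ∈ K⟮s⟯) : t ∈ K ∨ t * s ∈ K := by
  obtain ⟨a, ha, b, hb, rfl⟩ := exists_eq_add_mul_of_mem_adjoin_simple hs hts
  rcases eq_or_ne a 0 with rfl | ha0
  · right
    convert! mul_mem hb hs using 1
    ring
  rcases eq_or_ne b 0 with rfl | hb0
  · left
    simpa using ha
  have hsK : s ∈ K := by
    have : s = ((a + b * s) ^ 2 - a ^ 2 - b ^ 2 * s ^ 2) / (2 * a * b) := by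
      field_simp
      ring
    rw [this]
    exact div_mem (sub_mem (sub_mem ht (pow_mem ha 2)) (mul_mem (pow_mem hb 2) hs))
      (mul_mem (mul_mem (ofNat_mem K 2) ha) hb)
  exact .inl (add_mem ha (mul_mem hb hsK))

theorem exists_mul_mem_bot_of_mem_adjoin [NeZero (2 : E)] {A : Submonoid E}
    (hA : ∀ a ∈ A, a ^ 2 ∈ (⊥ : IntermediateField F E)) {t : E}
    (ht : t ^ 2 ∈ (⊥ : IntermediateField F E)) (htA : t ∈ adjoin F (A : Set E)) :
    ∃ a ∈ A, t * a ∈ (⊥ : IntermediateField F E) := by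
  classical
  obtain ⟨T, hTA, htT⟩ := exists_finset_of_mem_adjoin htA
  clear htA
  induction T using Finset.induction_on generalizing t with
  | empty => exact ⟨1, one_mem A, by simpa using htT⟩
  | insert s T _ ih =>
    rw [Finset.coe_insert, Set.insert_subset_iff] at hTA
    obtain ⟨hsA, hTA⟩ := hTA
    have hts : t ∈ (adjoin F (T : Set E))⟮s⟯ := by
      rwa [Finset.coe_insert, ← Set.union_singleton, ← adjoin_adjoin_left,
        mem_restrictScalars] at htT
    have hbot : (⊥ : IntermediateField F E) ≤ adjoin F T := bot_le
    rcases mem_or_mul_mem_of_mem_adjoin_simple (hbot (hA s hsA)) (hbot ht) hts with h | h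
    · exact ih ht hTA h
    · obtain ⟨a, ha, hta⟩ := ih (by rw [mul_pow]; exact mul_mem ht (hA s hsA)) hTA h
      exact ⟨s * a, mul_mem hsA ha, by rwa [← mul_assoc]⟩

theorem splits_minpoly_of_sq_eq_algebraMap {s : E} {c : F} (hs : s ^ 2 = algebraMap F E c) :
    ((minpoly F s).map (algebraMap F E)).Splits := by
  have hdvd : minpoly F s ∣ X ^ 2 - C c := minpoly.dvd F s (by simp [hs])
  refine Splits.of_dvd (Splits.of_natDegree_eq_two (x := s) ?_ ?_)
    (map_ne_zero (X_pow_sub_C_ne_zero two_pos c)) (Polynomial.map_dvd (algebraMap F E) hdvd)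
  · rw [natDegree_map, natDegree_X_pow_sub_C]
  · simp [hs]

theorem isSeparable_of_sq_eq_algebraMap [NeZero (2 : F)] {s : E} {c : F}
    (hs : s ^ 2 = algebraMap F E c) : IsSeparable F s := by
  rcases eq_or_ne c 0 with rfl | hc
  · obtain rfl : s = 0 := by simpa using hs
    rw [← map_zero (algebraMap F E)]
    exact isSeparable_algebraMap 0
  · exact (separable_X_pow_sub_C c (NeZero.ne (2 : F)) hc).of_dvd (minpoly.dvd F s (by simp [hs]))

theorem isGalois_adjoin_of_sq_mem_bot [NeZero (2 : F)] {S : Set E}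
    (hS : ∀ s ∈ S, s ^ 2 ∈ (⊥ : IntermediateField F E)) : IsGalois F (adjoin F S) := by
  have hsq (s : E) (hs : s ∈ S) : ∃ c : F, s ^ 2 = algebraMap F E c := by
    obtain ⟨c, hc⟩ := mem_bot.1 (hS s hs)
    exact ⟨c, hc.symm⟩
  have hsep (s : E) (hs : s ∈ S) : IsSeparable F s := by
    obtain ⟨c, hc⟩ := hsq s hs
    exact isSeparable_of_sq_eq_algebraMap hc
  have hsplits (s : E) (hs : s ∈ S) : ((minpoly F s).map (algebraMap F (adjoin F S))).Splits := by
    obtain ⟨c, hc⟩ := hsq s hs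
    let r : adjoin F S := ⟨s, subset_adjoin F S hs⟩
    rw [show minpoly F s = minpoly F r from (minpoly_eq r).symm]
    exact splits_minpoly_of_sq_eq_algebraMap (c := c) (Subtype.ext hc)
  have : Algebra.IsSeparable F (adjoin F S) := (isSeparable_adjoin_iff_isSeparable F E).2 hsep
  have : Normal F (adjoin F S) := normal_iff.2 fun x ↦ by
    refine ⟨Algebra.IsIntegral.isIntegral x, ?_⟩
    rw [minpoly_eq]
    exact splits_of_mem_adjoin F E (fun s hs ↦ ⟨(hsep s hs).isIntegral, hsplits s hs⟩) x.2
  exact {}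

theorem exists_mem_fixingSubgroup_apply_ne [IsGalois F E] {K : IntermediateField F E} {x : E}
    (hx : x ∉ K) : ∃ σ ∈ K.fixingSubgroup, σ x ≠ x := by
  rw [← InfiniteGalois.fixedField_fixingSubgroup K, mem_fixedField_iff] at hx
  push Not at hx
  exact hx

section Character

variable {M : Type*} [Monoid M]

theorem notMem_adjoin_map_mker [NeZero (2 : E)] {N : Type*} [MulOneClass N] {ρ : M →* E}
    {χ : M →* N} {q : M}
    (hρ : ∀ m, ρ m ^ 2 ∈ (⊥ : IntermediateField F E))
    (hker : ∀ m, ρ m ∈ (⊥ : IntermediateField F E) → χ m = 1) (hq : χ q ≠ 1) :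
    ρ q ∉ adjoin F ((MonoidHom.mker χ).map ρ : Set E) := by
  intro hmem
  have hsq : ∀ a ∈ (MonoidHom.mker χ).map ρ, a ^ 2 ∈ (⊥ : IntermediateField F E) := by
    rintro _ ⟨m, -, rfl⟩
    exact hρ m
  obtain ⟨_, ⟨m, hm, rfl⟩, hqm⟩ := exists_mul_mem_bot_of_mem_adjoin hsq (hρ q) hmem
  have hχqm : χ (q * m) = 1 := hker _ (by rwa [map_mul])
  rw [map_mul, MonoidHom.mem_mker.1 hm, mul_one] at hχqm
  exact hq hχqm

theorem exists_galois_apply_eq_character_mul [IsGalois F E] {ρ χ : M →* E}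
    (hρ : ∀ m, ρ m ^ 2 ∈ (⊥ : IntermediateField F E)) (hχ : ∀ m, χ m ^ 2 = 1)
    (hker : ∀ m, ρ m ∈ (⊥ : IntermediateField F E) → χ m = 1) :
    ∃ σ : Gal(E/F), ∀ m, σ (ρ m) = χ m * ρ m := by
  by_cases htriv : ∀ m, χ m = 1
  · exact ⟨1, fun m ↦ by simp [htriv m]⟩
  have hneg {m : M} (hm : χ m ≠ 1) : χ m = -1 := (sq_eq_one_iff.1 (hχ m)).resolve_left hm
  push Not at htriv
  obtain ⟨q, hq⟩ := htriv
  have : NeZero (2 : E) := ⟨fun h2 ↦ hq (by rw [hneg hq]; linear_combination -h2)⟩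
  obtain ⟨σ, hσ, hσq⟩ := exists_mem_fixingSubgroup_apply_ne (notMem_adjoin_map_mker hρ hker hq)
  have hfix {m : M} (hm : χ m = 1) : σ (ρ m) = ρ m :=
    hσ ⟨ρ m, subset_adjoin F _ ⟨m, hm, rfl⟩⟩
  have hσsq : σ (ρ q) ^ 2 = ρ q ^ 2 := by
    rw [← map_pow, ← map_pow, hfix (by rw [map_pow, hχ])]
  have hqneg : σ (ρ q) = -ρ q := (sq_eq_sq_iff_eq_or_eq_neg.1 hσsq).resolve_left hσq
  have hq0 : ρ q ≠ 0 := fun h ↦ hσq (by rw [h, map_zero])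
  refine ⟨σ, fun m ↦ ?_⟩
  by_cases hm : χ m = 1
  · rw [hfix hm, hm, one_mul]
  · have hmq : σ (ρ (m * q)) = ρ (m * q) := hfix (by rw [map_mul, hneg hm, hneg hq]; ring)
    rw [map_mul, map_mul, hqneg] at hmq
    rw [hneg hm]
    apply mul_right_cancel₀ hq0
    linear_combination -hmq

end Character

theorem exists_freeMonoid_lift_eq_mul_prod {ι : Type*} {s ε : ι → E}
    (hs : ∀ i, s i ^ 2 ∈ (⊥ : IntermediateField F E)) (hs0 : ∀ i, s i ≠ 0)
    (hε : ∀ i, ε i ^ 2 = 1) (w : FreeMonoid ι) :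
    ∃ U : Finset ι, ∃ c ∈ (⊥ : IntermediateField F E), c ≠ 0 ∧
      FreeMonoid.lift s w = c * ∏ i ∈ U, s i ∧ FreeMonoid.lift ε w = ∏ i ∈ U, ε i := by
  classical
  induction w using FreeMonoid.inductionOn' with
  | one => exact ⟨∅, 1, one_mem _, one_ne_zero, by simp, by simp⟩
  | of_mul i w ih =>
    obtain ⟨U, c, hc, hc0, hsw, hεw⟩ := ih
    simp only [map_mul, FreeMonoid.lift_eval_of, hsw, hεw]
    by_cases hi : i ∈ U
    · refine ⟨U.erase i, c * s i ^ 2, mul_mem hc (hs i), mul_ne_zero hc0 (pow_ne_zero 2 (hs0 i)),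
        ?_, ?_⟩
      · rw [← Finset.mul_prod_erase U s hi]
        ring
      · rw [← Finset.mul_prod_erase U ε hi, ← mul_assoc, ← sq, hε, one_mul]
    · refine ⟨insert i U, c, hc, hc0, ?_, Finset.prod_insert hi |>.symm⟩
      rw [Finset.prod_insert hi]
      ring

theorem exists_galois_apply_eq_sign_mul [IsGalois F E] {ι : Type*} {s ε : ι → E}
    (hs : ∀ i, s i ^ 2 ∈ (⊥ : IntermediateField F E))
    (hprod : ∀ U : Finset ι, ∏ i ∈ U, s i ∈ (⊥ : IntermediateField F E) → U = ∅)
    (hε : ∀ i, ε i ^ 2 = 1) : ∃ σ : Gal(E/F), ∀ i, σ (s i) = ε i * s i := by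
  have hs0 (i : ι) : s i ≠ 0 := fun h ↦
    Finset.singleton_ne_empty i (hprod {i} (by rw [Finset.prod_singleton, h]; exact zero_mem _))
  -- The free monoid has no relations, so the signs extend to a character of it.
  have hsq (w : FreeMonoid ι) : FreeMonoid.lift s w ^ 2 ∈ (⊥ : IntermediateField F E) := by
    obtain ⟨U, c, hc, -, hw, -⟩ := exists_freeMonoid_lift_eq_mul_prod hs hs0 hε w
    rw [hw, mul_pow, ← Finset.prod_pow]
    exact mul_mem (pow_mem hc 2) (prod_mem fun i _ ↦ hs i)
  have hεsq (w : FreeMonoid ι) : FreeMonoid.lift ε w ^ 2 = 1 := by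
    obtain ⟨U, -, -, -, -, hw⟩ := exists_freeMonoid_lift_eq_mul_prod hs hs0 hε w
    rw [hw, ← Finset.prod_pow, Finset.prod_eq_one fun i _ ↦ hε i]
  have hker (w : FreeMonoid ι) (hw : FreeMonoid.lift s w ∈ (⊥ : IntermediateField F E)) :
      FreeMonoid.lift ε w = 1 := by
    obtain ⟨U, c, hc, hc0, hsw, hεw⟩ := exists_freeMonoid_lift_eq_mul_prod hs hs0 hε w
    have hU : ∏ i ∈ U, s i ∈ (⊥ : IntermediateField F E) := by
      rw [eq_div_of_mul_eq hc0 ((mul_comm _ c).trans hsw.symm)]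
      exact div_mem hw hc
    rw [hεw, hprod U hU, Finset.prod_empty]
  obtain ⟨σ, hσ⟩ := exists_galois_apply_eq_character_mul hsq hεsq hker
  exact ⟨σ, fun i ↦ hσ (FreeMonoid.of i)⟩

theorem exists_automorphism_of_signs_general [NeZero (2 : F)] {ι : Type*} {S : Set ι}
    {s ε : ι → E} (hs : ∀ i ∈ S, s i ^ 2 ∈ (⊥ : IntermediateField F E))
    (hprod : ∀ U : Finset ι, ↑U ⊆ S → ∏ i ∈ U, s i ∈ (⊥ : IntermediateField F E) → U = ∅)
    (hε : ∀ i ∈ S, ε i = 1 ∨ ε i = -1) :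
    ∃ σ : Gal(adjoin F {x : E | ∃ i ∈ S, x = s i}/F),
      ∀ i ∈ S, ∀ x : adjoin F {x : E | ∃ i ∈ S, x = s i}, (x : E) = s i →
        (σ x : E) = ε i * s i := by
  let L := adjoin F {x : E | ∃ i ∈ S, x = s i}
  have hmem_bot {x : L} :
      x ∈ (⊥ : IntermediateField F L) ↔ (x : E) ∈ (⊥ : IntermediateField F E) := by
    rw [← mem_lift, lift_bot]
  have : IsGalois F L := isGalois_adjoin_of_sq_mem_bot (by rintro _ ⟨i, hi, rfl⟩; exact hs i hi)
  let s' (i : S) : L := ⟨s i, subset_adjoin F _ ⟨i, i.2, rfl⟩⟩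
  have hεL (i : S) : ε i ∈ L := by
    rcases hε i i.2 with h | h <;> rw [h]
    · exact one_mem L
    · exact neg_mem (one_mem L)
  have hprod' (U : Finset S) (hU : ∏ i ∈ U, s' i ∈ (⊥ : IntermediateField F L)) : U = ∅ := by
    rw [← Finset.map_eq_empty (f := .subtype (· ∈ S))]
    refine hprod _ (fun i hi ↦ Finset.property_of_mem_map_subtype U hi) ?_
    simpa [s'] using hmem_bot.1 hU
  obtain ⟨σ, hσ⟩ := exists_galois_apply_eq_sign_mul (ε := fun i ↦ ⟨ε i, hεL i⟩)
    (fun i : S ↦ hmem_bot.2 (hs i i.2)) hprod'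
    (fun i ↦ Subtype.ext (sq_eq_one_iff.2 (hε i i.2)))
  refine ⟨σ, fun i hi x hx ↦ ?_⟩
  rw [show x = s' ⟨i, hi⟩ from Subtype.ext hx, hσ]
  rfl

end SquareRoots

theorem squarefree_prod_of_prime {U : Finset ℕ} (hU : ∀ p ∈ U, p.Prime) :
    Squarefree (∏ p ∈ U, p) := by
  refine Finset.squarefree_prod_of_pairwise_isCoprime (fun p hp q hq hpq ↦ ?_)
    fun p hp ↦ (hU p hp).squarefree
  exact Nat.coprime_iff_isRelPrime.1 ((Nat.coprime_primes (hU p hp) (hU q hq)).2 hpq)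

theorem eq_empty_of_prod_sqrt_mem_bot {U : Finset ℕ} (hU : ∀ p ∈ U, p.Prime)
    (hprod : ∏ p ∈ U, √(p : ℝ) ∈ (⊥ : IntermediateField ℚ ℝ)) : U = ∅ := by
  rw [← Real.sqrt_prod U fun p _ ↦ Nat.cast_nonneg p, ← Nat.cast_prod] at hprod
  have hsquare : IsSquare (∏ p ∈ U, p) := by
    by_contra h
    exact irrational_sqrt_natCast_iff.2 h (mem_bot.1 hprod)
  obtain ⟨k, hk⟩ := hsquare
  have hk_unit : IsUnit k := squarefree_prod_of_prime hU k ⟨1, by rw [hk, mul_one]⟩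
  rw [Nat.isUnit_iff.1 hk_unit, mul_one, Finset.prod_eq_one_iff] at hk
  exact Finset.eq_empty_of_forall_notMem fun p hp ↦ (hU p hp).ne_one (hk p hp)

/-- Let `S` be a set of primes and `K` the subfield of `ℝ` generated over `ℚ` by
`{√p : p ∈ S}`. Then for every sign function `ε : S → {1, −1}` there is a ring
automorphism `σ` of `K` with `σ(√p) = ε(p)·√p` for every `p ∈ S`. -/
theorem exists_automorphism_of_signs (S : Set ℕ) (hS : ∀ p ∈ S, Nat.Prime p)
    (K : Subfield ℝ)
    (hK : K = Subfield.closure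
      (Set.range ((↑) : ℚ → ℝ) ∪ {x : ℝ | ∃ p ∈ S, x = Real.sqrt p}))
    (ε : ℕ → ℝ) (hε : ∀ p ∈ S, ε p = 1 ∨ ε p = -1) :
    ∃ σ : K ≃+* K, ∀ p ∈ S, ∀ x : K, (x : ℝ) = Real.sqrt p →
      ((σ x : K) : ℝ) = ε p * Real.sqrt p := by
  subst hK
  obtain ⟨σ, hσ⟩ := exists_automorphism_of_signs_general (F := ℚ) (s := fun p : ℕ ↦ √(p : ℝ))
    (fun p _ ↦ by simp) (fun U hU ↦ eq_empty_of_prod_sqrt_mem_bot fun p hp ↦ hS p (hU hp)) hε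
  exact ⟨σ.toRingEquiv, hσ⟩
end
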